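/- Let U be a nonempty finite set, f : Finset U → ℝ monotone and submodular with f(∅) = 0, κ ≥ 1 a natural number, OPT ⊆ U with |OPT| ≤ κ, α ∈ [0,1], and ε ≥ 0. Suppose f({x}) ≤ f(OPT) for all x ∈ U, and let S ⊆ U be such that every o ∈ OPT \ S satisfies Δf(S,o) ≤ (α/κ)·(max_{x ∈ U} f({x}) + ε) + ε. Then f(S) ≥ (1 − α)·f(OPT) − 2κε. -/

import Mathlib

/-!
By submodularity, adding all of `OPT \ S` to `S` gains at most the sum of the individual marginal
gains at `S`. There are at most `κ` of these, and each is at most `(α/κ) (f OPT + ε) + ε` because no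
singleton is worth more than `OPT`. By monotonicity,
`f OPT ≤ f (S ∪ OPT) ≤ f S + α (f OPT + ε) + κ ε`.
-/

section Submodular

variable {U R : Type*} [DecidableEq U] [AddCommGroup R]

/-- The marginal gain `Δf(S, x)` of adding the element `x` to the set `S`. It is `0` if `x ∈ S`. -/
def marginalGain (f : Finset U → R) (S : Finset U) (x : U) : R :=
  f (insert x S) - f S

/-- A set function is submodular if its marginal gains diminish as the set grows. The new element
is required to lie outside the larger set: otherwise monotonicity of `f` would be implied. -/
def IsSubmodular [LE R] (f : Finset U → R) : Prop :=
  ∀ ⦃X Y : Finset U⦄, X ⊆ Y → ∀ ⦃x : U⦄, x ∉ Y → marginalGain f Y x ≤ marginalGain f X x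

variable [PartialOrder R] [IsOrderedAddMonoid R] {f : Finset U → R}

theorem IsSubmodular.union_le_add_sum_marginalGain (hf : IsSubmodular f) (S A : Finset U) :
    f (S ∪ A) ≤ f S + ∑ x ∈ A \ S, marginalGain f S x := by
  induction A using Finset.induction_on with
  | empty => simp
  | insert a A haA ih =>
    by_cases haS : a ∈ S
    · rwa [Finset.union_insert, Finset.insert_eq_of_mem (Finset.mem_union_left A haS),
        Finset.insert_sdiff_of_mem A haS]
    · have ha : a ∉ S ∪ A := by simp [haS, haA]
      calc f (S ∪ insert a A)
          = marginalGain f (S ∪ A) a + f (S ∪ A) := by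
            rw [Finset.union_insert, marginalGain, sub_add_cancel]
        _ ≤ marginalGain f S a + (f S + ∑ x ∈ A \ S, marginalGain f S x) :=
            add_le_add (hf Finset.subset_union_left ha) ih
        _ = f S + ∑ x ∈ insert a A \ S, marginalGain f S x := by
            rw [Finset.insert_sdiff_of_notMem A haS, Finset.sum_insert (by simp [haA]),
              add_left_comm]

theorem IsSubmodular.le_add_card_nsmul (hf : IsSubmodular f) (hmono : Monotone f)
    {S A : Finset U} {τ : R} (hτ : ∀ x ∈ A \ S, marginalGain f S x ≤ τ) :
    f A ≤ f S + (A \ S).card • τ :=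
  calc f A ≤ f (S ∪ A) := hmono Finset.subset_union_right
    _ ≤ f S + ∑ x ∈ A \ S, marginalGain f S x := hf.union_le_add_sum_marginalGain S A
    _ ≤ f S + (A \ S).card • τ := by gcongr; exact Finset.sum_le_card_nsmul _ _ _ hτ

end Submodular

theorem threshold_greedy_early_termination_general {U : Type*} [DecidableEq U]
    {f : Finset U → ℝ} (hmono : Monotone f) (hsub : IsSubmodular f) (hf0 : 0 ≤ f ∅)
    {κ : ℕ} {OPT : Finset U} (hOPT : OPT.card ≤ κ) {α ε : ℝ} (hα : 0 ≤ α) (hε : 0 ≤ ε)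
    (hsingleton : ∀ x, f {x} ≤ f OPT) {S : Finset U}
    (hfail : ∀ o ∈ OPT \ S, marginalGain f S o ≤ α / κ * ((⨆ x, f {x}) + ε) + ε) :
    (1 - α) * f OPT - (κ + α) * ε ≤ f S := by
  have hOPT_nonneg : 0 ≤ f OPT := hf0.trans (hmono (Finset.empty_subset OPT))
  have hsup : ⨆ x, f {x} ≤ f OPT := Real.iSup_le hsingleton hOPT_nonneg
  have hcard : ((OPT \ S).card : ℝ) ≤ κ := by
    exact_mod_cast (Finset.card_le_card Finset.sdiff_subset).trans hOPT
  have hratio : ((OPT \ S).card : ℝ) / κ ≤ 1 := div_le_one_of_le₀ hcard κ.cast_nonneg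
  have hgain : f OPT ≤ f S + (α * (f OPT + ε) + κ * ε) :=
    calc f OPT
        ≤ f S + (OPT \ S).card • (α / κ * ((⨆ x, f {x}) + ε) + ε) :=
          hsub.le_add_card_nsmul hmono hfail
      _ ≤ f S + (OPT \ S).card • (α / κ * (f OPT + ε) + ε) := by gcongr
      _ = f S + ((OPT \ S).card / κ * (α * (f OPT + ε)) + (OPT \ S).card * ε) := by
          rw [nsmul_eq_mul]; ring
      _ ≤ f S + (1 * (α * (f OPT + ε)) + κ * ε) := by gcongr
      _ = f S + (α * (f OPT + ε) + κ * ε) := by rw [one_mul]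
  linarith

/-- Threshold greedy termination case with fewer than κ elements: if every
remaining optimal element fails the final threshold `(α/κ)·(max_x f {x} + ε) + ε`, then
`f S ≥ (1-α)·f OPT - 2κε`. -/
theorem threshold_greedy_early_termination
    {U : Type*} [Fintype U] [DecidableEq U] [Nonempty U]
    (f : Finset U → ℝ)
    (hmono : ∀ X Y : Finset U, X ⊆ Y → f X ≤ f Y)
    (hsub : ∀ X Y : Finset U, X ⊆ Y → ∀ x ∉ Y,
      f (insert x X) - f X ≥ f (insert x Y) - f Y)
    (hf0 : f ∅ = 0)
    (κ : ℕ) (hκ : 1 ≤ κ)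
    (OPT : Finset U) (hOPT : OPT.card ≤ κ)
    (α : ℝ) (hα0 : 0 ≤ α) (hα1 : α ≤ 1)
    (ε : ℝ) (hε : 0 ≤ ε)
    (hsingleton : ∀ x : U, f {x} ≤ f OPT)
    (S : Finset U)
    (hfail : ∀ o ∈ OPT \ S, f (insert o S) - f S ≤
      (α / κ) * (Finset.univ.sup' Finset.univ_nonempty (fun x => f {x}) + ε) + ε) :
    f S ≥ (1 - α) * f OPT - 2 * κ * ε := by
  rw [Finset.sup'_univ_eq_ciSup] at hfail
  have hbound : (1 - α) * f OPT - (κ + α) * ε ≤ f S :=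
    threshold_greedy_early_termination_general hmono hsub hf0.ge hOPT hα0 hε hsingleton hfail
  have hακ : α * ε ≤ κ * ε := by
    gcongr
    exact hα1.trans (by exact_mod_cast hκ)
  linarith
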